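/- Let 1≤s≤∞, and let g(t), h(t) be 2π-periodic functions having finite derivatives and satisfying r(t) := √(g²(t)+h²(t)) ≠ 0 for all t and M := sup_{t∈ℝ} √((g'(t))²+(h'(t))²) / √(g²(t)+h²(t)) < ∞. Let φ(t) = g(t)cos(nt+γ) + h(t)sin(nt+γ) with γ∈ℝ, n∈ℕ. Then for all n ≥ 4πsM if 1≤s<∞ (and all n≥1 if s=∞), one has inf_{λ∈ℝ} ‖φ(·) − λ‖_s = ‖r‖_s ( ‖cos t‖_s/(2π)^{1/s} + δ_n M/n ), where |δ_n| < 14π. -/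

import Mathlib

open MeasureTheory Real Filter
open scoped ENNReal

/-- `L_s` norm over a period `[-π,π]` of a `2π`-periodic function. -/
noncomputable def periodNorm (s : ℝ≥0∞) (f : ℝ → ℝ) : ℝ :=
  (eLpNorm f s (volume.restrict (Set.Ioc (-π) π))).toReal

/-!
Put `z = g - i h`, so that `φ t = Re (z t * exp (i (n t + γ)))` and `r = |z|`, and average over
the phase: compare `φ (t + v / n)` with the pure wave `Re (z t * exp (i (n t + γ + v)))` in `L_s`
of the square of periods `(t, v) ∈ (-π, π]²`. By Grönwall's inequality they differ by at most
`(exp (π M / n) - 1) * r t`. The norm of the pure wave is `‖cos‖_s ‖r‖_s`, and subtracting a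
constant `λ` from it cannot decrease the norm, because it changes sign under `v ↦ v + π`.
By translation invariance in `t`, the norm of `φ (t + v / n) - λ` is `(2π)^(1/s) ‖φ - λ‖_s`.
This gives the estimate when `π M / n ≤ 1`; otherwise the error term exceeds the trivial bound
`‖r‖_s` on the two quantities compared.
-/

section ProductNorm

variable {α β E F : Type*} [MeasurableSpace α] [MeasurableSpace β]
  {μ : Measure α} {ν : Measure β} {p : ℝ≥0∞}

lemma essSup_le_iff_ae_le {f : α → ℝ≥0∞} {c : ℝ≥0∞} : essSup f μ ≤ c ↔ ∀ᵐ x ∂μ, f x ≤ c :=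
  ⟨fun h => (ENNReal.ae_le_essSup f).mono fun _ hx => hx.trans h, essSup_le_of_ae_le c⟩

variable [NormedAddCommGroup E] [NormedAddCommGroup F]

lemma eLpNorm_prod_eq_eLpNorm_eLpNorm [SFinite ν] {f : α × β → E} (hf : StronglyMeasurable f) :
    eLpNorm f p (μ.prod ν) = eLpNorm (fun x => eLpNorm (fun y => f (x, y)) p ν) p μ := by
  rcases eq_or_ne p 0 with rfl | hp0
  · simp
  rcases eq_or_ne p ∞ with rfl | hp
  · refine eq_of_forall_ge_iff fun c => ?_
    have hmeas : MeasurableSet {q | ‖f q‖ₑ ≤ c} := measurableSet_le hf.enorm measurable_const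
    simp only [eLpNorm_exponent_top, eLpNormEssSup, enorm_eq_self, essSup_le_iff_ae_le]
    exact Measure.ae_prod_iff_ae_ae hmeas
  · have hp_pos : 0 < p.toReal := ENNReal.toReal_pos hp0 hp
    simp only [eLpNorm_eq_lintegral_rpow_enorm_toReal hp0 hp, enorm_eq_self, ← ENNReal.rpow_mul,
      one_div_mul_cancel hp_pos.ne', ENNReal.rpow_one]
    rw [lintegral_prod _ (hf.enorm.pow_const _).aemeasurable]

lemma eLpNorm_prod_eq_eLpNorm_eLpNorm_symm [SFinite μ] [SFinite ν] {f : α × β → E}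
    (hf : StronglyMeasurable f) :
    eLpNorm f p (μ.prod ν) = eLpNorm (fun y => eLpNorm (fun x => f (x, y)) p μ) p ν := by
  rw [← eLpNorm_comp_measurePreserving hf.aestronglyMeasurable Measure.measurePreserving_swap]
  exact eLpNorm_prod_eq_eLpNorm_eLpNorm (hf.comp_measurable measurable_swap)

lemma eLpNorm_prod_eq_mul_of_forall_eLpNorm_eq [SFinite ν] {f : α × β → E}
    {g : α → F} {c : ℝ≥0∞} (hf : StronglyMeasurable f) (hc : c ≠ ∞)
    (hfg : ∀ x, eLpNorm (fun y => f (x, y)) p ν = c * ‖g x‖ₑ) :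
    eLpNorm f p (μ.prod ν) = c * eLpNorm g p μ := by
  have hc_enorm : ‖c.toReal‖ₑ = c := by
    rw [Real.enorm_of_nonneg ENNReal.toReal_nonneg, ENNReal.ofReal_toReal hc]
  calc eLpNorm f p (μ.prod ν) = eLpNorm (fun x => c * ‖g x‖ₑ) p μ := by
        simp only [eLpNorm_prod_eq_eLpNorm_eLpNorm hf, hfg]
    _ = eLpNorm (c.toReal • fun x => ‖g x‖) p μ :=
        eLpNorm_congr_enorm_ae (.of_forall fun x => by simp [hc_enorm])
    _ = c * eLpNorm g p μ := by rw [eLpNorm_const_smul, hc_enorm, eLpNorm_norm]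

lemma eLpNorm_comp_fst_prod [IsFiniteMeasure ν] {f : α → E}
    (hf : StronglyMeasurable f) (hp : p ≠ 0) (hν : ν ≠ 0) :
    eLpNorm (fun q => f q.1) p (μ.prod ν) = ν Set.univ ^ (1 / p.toReal) * eLpNorm f p μ :=
  eLpNorm_prod_eq_mul_of_forall_eLpNorm_eq (hf.comp_measurable measurable_fst)
    (ENNReal.rpow_ne_top_of_nonneg (by positivity) (measure_ne_top ν _))
    fun x => (eLpNorm_const (f x) hp hν).trans (mul_comm _ _)

lemma eLpNorm_le_eLpNorm_add_of_norm_sub_le {f g : α → E} {h : α → F} {c : ℝ} (hp : 1 ≤ p)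
    (hf : AEStronglyMeasurable f μ) (hg : AEStronglyMeasurable g μ)
    (hfg : ∀ᵐ x ∂μ, ‖f x - g x‖ ≤ c * ‖h x‖) :
    eLpNorm f p μ ≤ eLpNorm g p μ + ENNReal.ofReal c * eLpNorm h p μ :=
  calc eLpNorm f p μ = eLpNorm (g + (f - g)) p μ := by rw [add_sub_cancel]
    _ ≤ eLpNorm g p μ + eLpNorm (f - g) p μ := eLpNorm_add_le hg (hf.sub hg) hp
    _ ≤ _ := by gcongr; exact eLpNorm_le_mul_eLpNorm_of_ae_le_mul hfg p

end ProductNorm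

section PeriodicNorm

variable {E : Type*} [NormedAddCommGroup E] {f : ℝ → E} {T : ℝ}

lemma eLpNorm_restrict_Ioc_eq_of_periodic (hf : Function.Periodic f T) (hT : 0 < T) (a b : ℝ)
    (p : ℝ≥0∞) :
    eLpNorm f p (volume.restrict (Set.Ioc a (a + T))) =
      eLpNorm f p (volume.restrict (Set.Ioc b (b + T))) := by
  have domain (c : ℝ) := isAddFundamentalDomain_Ioc hT c
  rcases eq_or_ne p 0 with rfl | hp0
  · simp
  rcases eq_or_ne p ∞ with rfl | hp
  · have invariant := (hf.comp (‖·‖ₑ)).map_vadd_zmultiples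
    simp only [eLpNorm_exponent_top, eLpNormEssSup]
    exact ((domain a).essSup_measure_restrict invariant).trans
      ((domain b).essSup_measure_restrict invariant).symm
  · simp only [eLpNorm_eq_lintegral_rpow_enorm_toReal hp0 hp]
    rw [(domain a).setLIntegral_eq (domain b) (‖f ·‖ₑ ^ p.toReal)
      (hf.comp (‖·‖ₑ ^ p.toReal)).map_vadd_zmultiples]

lemma eLpNorm_comp_add_right_of_periodic (hf : Function.Periodic f T) (hT : 0 < T) (a u : ℝ)
    (p : ℝ≥0∞) :
    eLpNorm (fun x => f (x + u)) p (volume.restrict (Set.Ioc a (a + T))) =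
      eLpNorm f p (volume.restrict (Set.Ioc a (a + T))) := by
  have translate := (measurePreserving_add_right (volume : Measure ℝ) u).restrict_preimage_emb
    (measurableEmbedding_addRight u) (Set.Ioc (a + u) (a + u + T))
  have preimage : (· + u) ⁻¹' Set.Ioc (a + u) (a + u + T) = Set.Ioc a (a + T) := by
    rw [Set.preimage_add_const_Ioc]; ring_nf
  rw [preimage] at translate
  rw [eLpNorm_restrict_Ioc_eq_of_periodic hf hT a (a + u), ← translate.map_eq,
    (measurableEmbedding_addRight u).eLpNorm_map_measure]
  rfl

lemma eLpNorm_le_eLpNorm_sub_const_of_antiperiodic [NormedSpace ℝ E] {p : ℝ≥0∞} {a : ℝ}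
    (hf : Function.Antiperiodic f T) (hT : 0 < T) (hp : 1 ≤ p)
    (hfm : AEStronglyMeasurable f (volume.restrict (Set.Ioc a (a + 2 * T)))) (c : E) :
    eLpNorm f p (volume.restrict (Set.Ioc a (a + 2 * T))) ≤
      eLpNorm (fun x => f x - c) p (volume.restrict (Set.Ioc a (a + 2 * T))) := by
  set μ := volume.restrict (Set.Ioc a (a + 2 * T))
  -- `f + c` is the negative of a translate of `f - c`, and `2 f = (f - c) + (f + c)`.
  have add_eq_sub : eLpNorm (fun x => f x + c) p μ = eLpNorm (fun x => f x - c) p μ :=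
    calc eLpNorm (fun x => f x + c) p μ = eLpNorm (fun x => f (x + T) - c) p μ := by
          rw [← eLpNorm_neg]
          exact congrArg (eLpNorm · p μ) (funext fun x => by
            rw [Pi.neg_apply, hf x, neg_add', sub_eq_add_neg])
      _ = eLpNorm (fun x => f x - c) p μ :=
          eLpNorm_comp_add_right_of_periodic (hf.periodic_two_mul.comp (· - c)) (by positivity)
            a T p
  have two_mul_le : 2 * eLpNorm f p μ ≤ 2 * eLpNorm (fun x => f x - c) p μ :=
    calc 2 * eLpNorm f p μ = eLpNorm ((2 : ℝ) • f) p μ := by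
          rw [eLpNorm_const_smul, Real.enorm_of_nonneg zero_le_two, ENNReal.ofReal_ofNat]
      _ = eLpNorm ((fun x => f x - c) + fun x => f x + c) p μ := by
          refine congrArg (eLpNorm · p μ) (funext fun x => ?_)
          simp [two_smul]
      _ ≤ eLpNorm (fun x => f x - c) p μ + eLpNorm (fun x => f x + c) p μ :=
          eLpNorm_add_le (hfm.sub aestronglyMeasurable_const)
            (hfm.add aestronglyMeasurable_const) hp
      _ = 2 * eLpNorm (fun x => f x - c) p μ := by rw [add_eq_sub, two_mul]
  exact (ENNReal.mul_le_mul_iff_right (by norm_num) (by norm_num)).1 two_mul_le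

end PeriodicNorm

lemma norm_sub_le_of_norm_deriv_le_mul_norm {E : Type*} [NormedAddCommGroup E] [NormedSpace ℝ E]
    {z : ℝ → E} {M : ℝ} (hz : Differentiable ℝ z) (hM : 0 ≤ M)
    (hbound : ∀ t, ‖deriv z t‖ ≤ M * ‖z t‖) (t u : ℝ) :
    ‖z (t + u) - z t‖ ≤ (exp (M * |u|) - 1) * ‖z t‖ := by
  have hderiv (x : ℝ) :
      HasDerivAt (fun x => z (t + x * u) - z t) (u • deriv z (t + x * u)) x := by
    have := (hz (t + x * u)).hasDerivAt.scomp x (((hasDerivAt_id x).mul_const u).const_add t)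
    simpa using this.sub_const (z t)
  have growth (x : ℝ) : ‖u • deriv z (t + x * u)‖ ≤
      M * |u| * ‖z (t + x * u) - z t‖ + M * |u| * ‖z t‖ :=
    calc ‖u • deriv z (t + x * u)‖ ≤ |u| * (M * ‖z (t + x * u)‖) := by
          rw [norm_smul, norm_eq_abs]; gcongr; exact hbound _
      _ ≤ |u| * (M * (‖z (t + x * u) - z t‖ + ‖z t‖)) := by
          gcongr; exact norm_le_norm_sub_add _ _
      _ = _ := by ring
  have gronwall := norm_le_gronwallBound_of_norm_deriv_right_le (δ := 0) (a := 0) (b := 1)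
    (fun x _ => (hderiv x).continuousAt.continuousWithinAt)
    (fun x _ => (hderiv x).hasDerivWithinAt) (by simp) (fun x _ => growth x) 1 (by simp)
  rcases eq_or_ne (M * |u|) 0 with h0 | h0
  · simpa [h0, gronwallBound_K0] using gronwall
  · simpa [gronwallBound_of_K_ne_0 h0, mul_div_cancel_left₀ _ h0, mul_comm] using gronwall

section Wave

/-- The harmonic oscillation with complex amplitude `w`, evaluated at phase `x`. -/
noncomputable def wave (w : ℂ) (x : ℝ) : ℝ := (w * Complex.exp (x * Complex.I)).re

lemma wave_eq_norm_mul_cos (w : ℂ) (x : ℝ) : wave w x = ‖w‖ * cos (x + w.arg) := by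
  have polar : w * Complex.exp (x * Complex.I) =
      ‖w‖ * Complex.exp ((x + w.arg : ℝ) * Complex.I) := by
    conv_lhs => rw [← Complex.norm_mul_exp_arg_mul_I w]
    rw [mul_assoc, ← Complex.exp_add]
    push_cast
    ring_nf
  rw [wave, polar, Complex.re_ofReal_mul, Complex.exp_ofReal_mul_I_re]

lemma wave_sub_mul_I (a b x : ℝ) : wave (a - b * Complex.I) x = a * cos x + b * sin x := by
  simp [wave, Complex.exp_ofReal_mul_I_re, Complex.exp_ofReal_mul_I_im]

lemma wave_sub (w w' : ℂ) (x : ℝ) : wave (w - w') x = wave w x - wave w' x := by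
  simp only [wave, sub_mul, Complex.sub_re]

lemma abs_wave_le (w : ℂ) (x : ℝ) : |wave w x| ≤ ‖w‖ := by
  rw [wave_eq_norm_mul_cos, abs_mul, abs_norm]
  exact mul_le_of_le_one_right (norm_nonneg w) (abs_cos_le_one _)

lemma wave_antiperiodic (w : ℂ) : Function.Antiperiodic (wave w) π := fun x => by
  rw [wave_eq_norm_mul_cos, wave_eq_norm_mul_cos, add_right_comm, cos_add_pi, mul_neg]

@[fun_prop]
lemma continuous_wave {X : Type*} [TopologicalSpace X] {w : X → ℂ} {θ : X → ℝ}
    (hw : Continuous w) (hθ : Continuous θ) : Continuous fun x => wave (w x) (θ x) := by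
  unfold wave
  fun_prop

end Wave

section Period

/-- Lebesgue measure on the period `(-π, π]`, the measure underlying `periodNorm`. -/
noncomputable abbrev periodMeasure : Measure ℝ := volume.restrict (Set.Ioc (-π) π)

variable {E : Type*} [NormedAddCommGroup E] {f : ℝ → E} {s : ℝ≥0∞}

lemma periodMeasure_eq_restrict_Ioc_add :
    periodMeasure = volume.restrict (Set.Ioc (-π) (-π + 2 * π)) := by
  rw [show -π + 2 * π = π by ring]

lemma periodMeasure_univ : periodMeasure Set.univ = ENNReal.ofReal (2 * π) := by
  rw [Measure.restrict_apply_univ, Real.volume_Ioc, sub_neg_eq_add, two_mul]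

lemma periodMeasure_ne_zero : periodMeasure ≠ 0 := by
  rw [← Measure.measure_univ_ne_zero, periodMeasure_univ]
  simp [pi_pos]

lemma memLp_periodMeasure_of_continuous (hf : Continuous f) : MemLp f s periodMeasure := by
  obtain ⟨C, hC⟩ := (isCompact_Icc (a := -π) (b := π)).exists_bound_of_continuousOn hf.continuousOn
  exact MemLp.of_bound hf.aestronglyMeasurable C <|
    (ae_restrict_mem measurableSet_Ioc).mono fun t ht => hC t (Set.Ioc_subset_Icc_self ht)

lemma eLpNorm_periodMeasure_comp_add_right (hf : Function.Periodic f (2 * π)) (u : ℝ) :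
    eLpNorm (fun t => f (t + u)) s periodMeasure = eLpNorm f s periodMeasure := by
  simpa only [periodMeasure_eq_restrict_Ioc_add] using
    eLpNorm_comp_add_right_of_periodic hf two_pi_pos (-π) u s

lemma eLpNorm_comp_add_prod_periodMeasure (hf : Function.Periodic f (2 * π)) (hfc : Continuous f)
    {σ : ℝ → ℝ} (hσ : Continuous σ) (hs : s ≠ 0) :
    eLpNorm (fun q : ℝ × ℝ => f (q.1 + σ q.2)) s (periodMeasure.prod periodMeasure) =
      periodMeasure Set.univ ^ (1 / s.toReal) * eLpNorm f s periodMeasure := by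
  have hmeas : StronglyMeasurable fun q : ℝ × ℝ => f (q.1 + σ q.2) :=
    Continuous.stronglyMeasurable (by fun_prop)
  simp only [eLpNorm_prod_eq_eLpNorm_eLpNorm_symm hmeas, eLpNorm_periodMeasure_comp_add_right hf]
  rw [eLpNorm_const _ hs periodMeasure_ne_zero, enorm_eq_self, mul_comm]

lemma eLpNorm_wave_add (w : ℂ) (x : ℝ) :
    eLpNorm (fun v => wave w (x + v)) s periodMeasure =
      eLpNorm cos s periodMeasure * ‖w‖ₑ :=
  calc eLpNorm (fun v => wave w (x + v)) s periodMeasure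
      = eLpNorm (fun v => ‖w‖ * cos (v + (x + w.arg))) s periodMeasure := by
        simp only [wave_eq_norm_mul_cos, add_comm x, add_assoc]
    _ = ‖w‖ₑ * eLpNorm (fun v => cos (v + (x + w.arg))) s periodMeasure := by
        rw [← enorm_norm w, ← eLpNorm_const_smul]; rfl
    _ = eLpNorm cos s periodMeasure * ‖w‖ₑ := by
        rw [eLpNorm_periodMeasure_comp_add_right cos_periodic, mul_comm]

lemma eLpNorm_wave_add_le_sub_const (hs : 1 ≤ s) (w : ℂ) (x l : ℝ) :
    eLpNorm (fun v => wave w (x + v)) s periodMeasure ≤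
      eLpNorm (fun v => wave w (x + v) - l) s periodMeasure := by
  have hanti : Function.Antiperiodic (fun v => wave w (x + v)) π := fun v => by
    simpa only [add_assoc] using wave_antiperiodic w (x + v)
  rw [periodMeasure_eq_restrict_Ioc_add]
  exact eLpNorm_le_eLpNorm_sub_const_of_antiperiodic hanti pi_pos hs
    (Continuous.aestronglyMeasurable (by fun_prop)) l

end Period

section ProductEstimate

variable {z : ℝ → ℂ} {f θ σ : ℝ → ℝ} {e : ℝ} {s : ℝ≥0∞}

lemma eLpNorm_wave_add_prod (hz : Continuous z) (hθ : Continuous θ) :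
    eLpNorm (fun q : ℝ × ℝ => wave (z q.1) (θ q.1 + q.2)) s (periodMeasure.prod periodMeasure) =
      eLpNorm cos s periodMeasure * eLpNorm z s periodMeasure :=
  eLpNorm_prod_eq_mul_of_forall_eLpNorm_eq (Continuous.stronglyMeasurable (by fun_prop))
    (memLp_periodMeasure_of_continuous continuous_cos).eLpNorm_ne_top
    fun t => eLpNorm_wave_add (z t) (θ t)

lemma eLpNorm_wave_add_prod_le_sub_const (hz : Continuous z) (hθ : Continuous θ) (hs : 1 ≤ s)
    (l : ℝ) :
    eLpNorm (fun q : ℝ × ℝ => wave (z q.1) (θ q.1 + q.2)) s (periodMeasure.prod periodMeasure) ≤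
      eLpNorm (fun q : ℝ × ℝ => wave (z q.1) (θ q.1 + q.2) - l) s
        (periodMeasure.prod periodMeasure) := by
  rw [eLpNorm_prod_eq_eLpNorm_eLpNorm (Continuous.stronglyMeasurable (by fun_prop)),
    eLpNorm_prod_eq_eLpNorm_eLpNorm (Continuous.stronglyMeasurable (by fun_prop))]
  exact eLpNorm_mono_enorm fun t => eLpNorm_wave_add_le_sub_const hs (z t) (θ t) l

lemma ae_abs_snd_le_pi :
    ∀ᵐ q : ℝ × ℝ ∂periodMeasure.prod periodMeasure, |q.2| ≤ π :=
  Measure.quasiMeasurePreserving_snd.ae <|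
    (ae_restrict_mem measurableSet_Ioc).mono fun _ hv => abs_le.2 ⟨hv.1.le, hv.2⟩

/-- The `2π`-periodic function `f` is an approximate wave: from each point `t`, moving by `σ v`
advances the phase of a wave of amplitude `z t` from `θ t` to `θ t + v`, up to relative error `e`.
The phase advance `v` ranges over one period `[-π, π]`. -/
structure IsApproxWave (f : ℝ → ℝ) (z : ℝ → ℂ) (θ σ : ℝ → ℝ) (e : ℝ) : Prop where
  continuous : Continuous f
  periodic : Function.Periodic f (2 * π)
  continuous_amplitude : Continuous z
  continuous_phase : Continuous θ
  continuous_shift : Continuous σ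
  error_nonneg : 0 ≤ e
  abs_sub_wave_le : ∀ t v, |v| ≤ π → |f (t + σ v) - wave (z t) (θ t + v)| ≤ e * ‖z t‖

lemma IsApproxWave.rpow_mul_eLpNorm_le (hf : IsApproxWave f z θ σ e) (hs : 1 ≤ s) :
    periodMeasure Set.univ ^ (1 / s.toReal) * eLpNorm f s periodMeasure ≤
      eLpNorm cos s periodMeasure * eLpNorm z s periodMeasure + ENNReal.ofReal e *
        (periodMeasure Set.univ ^ (1 / s.toReal) * eLpNorm z s periodMeasure) := by
  obtain ⟨hfc, hper, hz, hθ, hσ, -, hwave⟩ := hf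
  have hs0 : s ≠ 0 := (one_pos.trans_le hs).ne'
  rw [← eLpNorm_comp_add_prod_periodMeasure hper hfc hσ hs0, ← eLpNorm_wave_add_prod hz hθ,
    ← eLpNorm_comp_fst_prod hz.stronglyMeasurable hs0 periodMeasure_ne_zero]
  exact eLpNorm_le_eLpNorm_add_of_norm_sub_le hs (Continuous.aestronglyMeasurable (by fun_prop))
    (Continuous.aestronglyMeasurable (by fun_prop)) (ae_abs_snd_le_pi.mono fun q => hwave q.1 q.2)

lemma IsApproxWave.eLpNorm_cos_mul_le (hf : IsApproxWave f z θ σ e) (hs : 1 ≤ s) (l : ℝ) :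
    eLpNorm cos s periodMeasure * eLpNorm z s periodMeasure ≤
      periodMeasure Set.univ ^ (1 / s.toReal) * eLpNorm (fun t => f t - l) s periodMeasure +
        ENNReal.ofReal e *
          (periodMeasure Set.univ ^ (1 / s.toReal) * eLpNorm z s periodMeasure) := by
  obtain ⟨hfc, hper, hz, hθ, hσ, -, hwave⟩ := hf
  have hs0 : s ≠ 0 := (one_pos.trans_le hs).ne'
  have hper_sub : Function.Periodic (fun t => f t - l) (2 * π) := hper.comp (· - l)
  rw [← eLpNorm_comp_add_prod_periodMeasure hper_sub (by fun_prop) hσ hs0,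
    ← eLpNorm_wave_add_prod hz hθ,
    ← eLpNorm_comp_fst_prod hz.stronglyMeasurable hs0 periodMeasure_ne_zero]
  refine (eLpNorm_wave_add_prod_le_sub_const hz hθ hs l).trans ?_
  refine eLpNorm_le_eLpNorm_add_of_norm_sub_le hs (Continuous.aestronglyMeasurable (by fun_prop))
    (Continuous.aestronglyMeasurable (by fun_prop)) (ae_abs_snd_le_pi.mono fun q hq => ?_)
  simpa [abs_sub_comm] using hwave q.1 q.2 hq

end ProductEstimate

section PeriodNorm

variable {z : ℝ → ℂ} {f θ σ : ℝ → ℝ} {e : ℝ} {s : ℝ≥0∞}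

lemma periodNorm_nonneg : 0 ≤ periodNorm s f := ENNReal.toReal_nonneg

lemma periodNorm_norm : periodNorm s (fun t => ‖z t‖) = (eLpNorm z s periodMeasure).toReal := by
  rw [periodNorm, eLpNorm_norm]

lemma toReal_periodMeasure_univ_rpow (a : ℝ) :
    (periodMeasure Set.univ ^ a).toReal = (2 * π) ^ a := by
  rw [← ENNReal.toReal_rpow, periodMeasure_univ, ENNReal.toReal_ofReal two_pi_pos.le]

lemma periodMeasure_univ_rpow_ne_top {a : ℝ} (ha : 0 ≤ a) : periodMeasure Set.univ ^ a ≠ ∞ :=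
  ENNReal.rpow_ne_top_of_nonneg ha (measure_ne_top _ _)

lemma bddBelow_range_periodNorm_sub_const :
    BddBelow (Set.range fun l => periodNorm s fun t => f t - l) :=
  ⟨0, Set.forall_mem_range.2 fun _ => periodNorm_nonneg⟩

lemma iInf_periodNorm_sub_const_le : ⨅ l, periodNorm s (fun t => f t - l) ≤ periodNorm s f := by
  simpa using ciInf_le (bddBelow_range_periodNorm_sub_const (f := f) (s := s)) 0

lemma periodNorm_le_of_abs_le_norm (hz : Continuous z) (hfz : ∀ t, |f t| ≤ ‖z t‖) :
    periodNorm s f ≤ periodNorm s fun t => ‖z t‖ := by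
  rw [periodNorm_norm]
  exact ENNReal.toReal_mono (memLp_periodMeasure_of_continuous hz).eLpNorm_ne_top
    (eLpNorm_mono hfz)

lemma periodNorm_cos_div_le_one (hs : s ≠ 0) :
    periodNorm s cos / (2 * π) ^ (1 / s.toReal) ≤ 1 := by
  rw [div_le_one (by positivity), ← toReal_periodMeasure_univ_rpow]
  refine ENNReal.toReal_mono (periodMeasure_univ_rpow_ne_top (by positivity)) ?_
  calc eLpNorm cos s periodMeasure ≤ eLpNorm (fun _ => (1 : ℝ)) s periodMeasure :=
        eLpNorm_mono fun t => by simpa using abs_cos_le_one t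
    _ = periodMeasure Set.univ ^ (1 / s.toReal) := by
        rw [eLpNorm_const _ hs periodMeasure_ne_zero, enorm_one, one_mul]

lemma abs_iInf_periodNorm_sub_le_periodNorm (hz : Continuous z) (hs : s ≠ 0)
    (hfz : ∀ t, |f t| ≤ ‖z t‖) :
    |(⨅ l, periodNorm s fun t => f t - l) -
        periodNorm s (fun t => ‖z t‖) * (periodNorm s cos / (2 * π) ^ (1 / s.toReal))| ≤
      periodNorm s fun t => ‖z t‖ := by
  have hR : 0 ≤ periodNorm s fun t => ‖z t‖ := periodNorm_nonneg
  have hcos : 0 ≤ periodNorm s cos / (2 * π) ^ (1 / s.toReal) :=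
    div_nonneg periodNorm_nonneg (by positivity)
  refine abs_sub_le_of_nonneg_of_le (Real.iInf_nonneg fun _ => periodNorm_nonneg) ?_
    (by positivity) (mul_le_of_le_one_right hR (periodNorm_cos_div_le_one hs))
  exact iInf_periodNorm_sub_const_le.trans (periodNorm_le_of_abs_le_norm hz hfz)

lemma toReal_le_toReal_add_mul {a b c : ℝ≥0∞} (hb : b ≠ ∞) (hc : c ≠ ∞) (he : 0 ≤ e)
    (h : a ≤ b + ENNReal.ofReal e * c) : a.toReal ≤ b.toReal + e * c.toReal := by
  have := ENNReal.toReal_mono (by finiteness) h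
  rwa [ENNReal.toReal_add hb (by finiteness), ENNReal.toReal_mul, ENNReal.toReal_ofReal he] at this

lemma IsApproxWave.periodNorm_le (hf : IsApproxWave f z θ σ e) (hs : 1 ≤ s) :
    periodNorm s f ≤
      periodNorm s (fun t => ‖z t‖) * (periodNorm s cos / (2 * π) ^ (1 / s.toReal)) +
        e * periodNorm s fun t => ‖z t‖ := by
  have hz := (memLp_periodMeasure_of_continuous (s := s) hf.continuous_amplitude).eLpNorm_ne_top
  have hcos := (memLp_periodMeasure_of_continuous (s := s) continuous_cos).eLpNorm_ne_top
  have hκ : periodMeasure Set.univ ^ (1 / s.toReal) ≠ ∞ :=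
    periodMeasure_univ_rpow_ne_top (by positivity)
  have key := toReal_le_toReal_add_mul (ENNReal.mul_ne_top hcos hz) (ENNReal.mul_ne_top hκ hz)
    hf.error_nonneg (hf.rpow_mul_eLpNorm_le hs)
  simp only [ENNReal.toReal_mul, toReal_periodMeasure_univ_rpow, ← periodNorm_norm] at key
  have hκ_pos : 0 < (2 * π) ^ (1 / s.toReal) := by positivity
  rw [← mul_le_mul_iff_right₀ hκ_pos]
  refine key.trans_eq ?_
  change periodNorm s cos * _ + _ = _
  field_simp

lemma IsApproxWave.le_periodNorm_sub_const (hf : IsApproxWave f z θ σ e) (hs : 1 ≤ s) (l : ℝ) :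
    periodNorm s (fun t => ‖z t‖) * (periodNorm s cos / (2 * π) ^ (1 / s.toReal)) ≤
      periodNorm s (fun t => f t - l) + e * periodNorm s fun t => ‖z t‖ := by
  have hz := (memLp_periodMeasure_of_continuous (s := s) hf.continuous_amplitude).eLpNorm_ne_top
  have hfl := (memLp_periodMeasure_of_continuous (s := s)
    (hf.continuous.sub (continuous_const (y := l)))).eLpNorm_ne_top
  have hκ : periodMeasure Set.univ ^ (1 / s.toReal) ≠ ∞ :=
    periodMeasure_univ_rpow_ne_top (by positivity)
  have key := toReal_le_toReal_add_mul (ENNReal.mul_ne_top hκ hfl) (ENNReal.mul_ne_top hκ hz)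
    hf.error_nonneg (hf.eLpNorm_cos_mul_le hs l)
  simp only [ENNReal.toReal_mul, toReal_periodMeasure_univ_rpow, ← periodNorm_norm] at key
  have hκ_pos : 0 < (2 * π) ^ (1 / s.toReal) := by positivity
  rw [← mul_div_assoc, div_le_iff₀' hκ_pos, mul_comm (periodNorm s _) (periodNorm s cos)]
  refine key.trans_eq ?_
  change _ * periodNorm s (fun t => f t - l) + _ = _
  ring

lemma IsApproxWave.abs_iInf_periodNorm_sub_le (hf : IsApproxWave f z θ σ e) (hs : 1 ≤ s) :
    |(⨅ l, periodNorm s fun t => f t - l) -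
        periodNorm s (fun t => ‖z t‖) * (periodNorm s cos / (2 * π) ^ (1 / s.toReal))| ≤
      e * periodNorm s fun t => ‖z t‖ := by
  rw [abs_sub_le_iff, sub_le_iff_le_add', sub_le_comm]
  exact ⟨iInf_periodNorm_sub_const_le.trans (hf.periodNorm_le hs),
    le_ciInf fun l => sub_le_iff_le_add.2 (hf.le_periodNorm_sub_const hs l)⟩

end PeriodNorm

section Modulation

/-- The carrier `cos (n t + γ)` modulated by the slowly varying complex amplitude `z`. -/
noncomputable def modulated (z : ℝ → ℂ) (n : ℕ) (γ t : ℝ) : ℝ := wave (z t) (n * t + γ)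

variable {z : ℝ → ℂ} {n : ℕ} {γ M : ℝ} {s : ℝ≥0∞}

lemma continuous_modulated (hz : Continuous z) : Continuous (modulated z n γ) := by
  unfold modulated
  fun_prop

lemma modulated_periodic (hz : Function.Periodic z (2 * π)) :
    Function.Periodic (modulated z n γ) (2 * π) := fun t => by
  have phase : n * (t + 2 * π) + γ + (z t).arg = n * t + γ + (z t).arg + n * (2 * π) := by ring
  simp only [modulated, hz t, wave_eq_norm_mul_cos, phase, cos_add_nat_mul_two_pi]

lemma abs_modulated_add_div_sub_wave_le (hz : Differentiable ℝ z) (hM : 0 ≤ M)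
    (hbound : ∀ t, ‖deriv z t‖ ≤ M * ‖z t‖) (hn : n ≠ 0) (t : ℝ) {v : ℝ} (hv : |v| ≤ π) :
    |modulated z n γ (t + v / n) - wave (z t) (n * t + γ + v)| ≤
      (exp (π * M / n) - 1) * ‖z t‖ := by
  have phase : n * (t + v / n) + γ = n * t + γ + v := by field_simp; ring
  have rate : M * |v / n| ≤ π * M / n := by
    rw [abs_div, Nat.abs_cast, mul_div_assoc', mul_comm π]
    gcongr
  calc |modulated z n γ (t + v / n) - wave (z t) (n * t + γ + v)|
      = |wave (z (t + v / n) - z t) (n * t + γ + v)| := by rw [modulated, phase, wave_sub]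
    _ ≤ ‖z (t + v / n) - z t‖ := abs_wave_le _ _
    _ ≤ (exp (M * |v / n|) - 1) * ‖z t‖ := norm_sub_le_of_norm_deriv_le_mul_norm hz hM hbound t _
    _ ≤ (exp (π * M / n) - 1) * ‖z t‖ := by gcongr

lemma isApproxWave_modulated (hz : Differentiable ℝ z) (hper : Function.Periodic z (2 * π))
    (hM : 0 ≤ M) (hbound : ∀ t, ‖deriv z t‖ ≤ M * ‖z t‖) (hn : n ≠ 0) :
    IsApproxWave (modulated z n γ) z (fun t => n * t + γ) (fun v => v / n)
      (exp (π * M / n) - 1) where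
  continuous := continuous_modulated hz.continuous
  periodic := modulated_periodic hper
  continuous_amplitude := hz.continuous
  continuous_phase := by fun_prop
  continuous_shift := by fun_prop
  error_nonneg := sub_nonneg.2 (one_le_exp (by positivity))
  abs_sub_wave_le t _ hv := abs_modulated_add_div_sub_wave_le hz hM hbound hn t hv

lemma abs_iInf_periodNorm_modulated_sub_le (hs : 1 ≤ s) (hz : Differentiable ℝ z)
    (hper : Function.Periodic z (2 * π)) (hM : 0 ≤ M) (hbound : ∀ t, ‖deriv z t‖ ≤ M * ‖z t‖)
    (hn : n ≠ 0) :
    |(⨅ l, periodNorm s fun t => modulated z n γ t - l) -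
        periodNorm s (fun t => ‖z t‖) * (periodNorm s cos / (2 * π) ^ (1 / s.toReal))| ≤
      2 * (π * M / n) * periodNorm s fun t => ‖z t‖ := by
  have hx : 0 ≤ π * M / n := by positivity
  have hR : 0 ≤ periodNorm s fun t => ‖z t‖ := periodNorm_nonneg
  rcases le_total (π * M / n) 1 with hle | hge
  · refine ((isApproxWave_modulated hz hper hM hbound hn).abs_iInf_periodNorm_sub_le hs).trans ?_
    have := abs_exp_sub_one_le (abs_le.2 ⟨by linarith, hle⟩)
    rw [abs_of_nonneg hx] at this
    gcongr
    exact (le_abs_self _).trans this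
  · refine (abs_iInf_periodNorm_sub_le_periodNorm hz.continuous (one_pos.trans_le hs).ne'
      fun t => abs_wave_le _ _).trans ?_
    exact le_mul_of_one_le_left hR (by linarith)

end Modulation

lemma exists_abs_le_and_eq_mul_add {a R c x K : ℝ} (hR : 0 ≤ R) (hx : 0 ≤ x) (hK : 0 ≤ K)
    (h : |a - R * c| ≤ K * (R * x)) : ∃ δ, |δ| ≤ K ∧ a = R * (c + δ * x) := by
  rcases (mul_nonneg hR hx).eq_or_lt with h0 | hpos
  · refine ⟨0, by simpa using hK, ?_⟩
    rw [← h0, mul_zero, abs_nonpos_iff] at h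
    linarith
  · refine ⟨(a - R * c) / (R * x), ?_, ?_⟩
    · rwa [abs_div, abs_of_pos hpos, div_le_iff₀ hpos]
    · linear_combination -(div_mul_cancel₀ (a - R * c) hpos.ne')

section ComplexAmplitude

variable {g h : ℝ → ℝ}

/-- The complex amplitude of `g cos + h sin`. -/
noncomputable def complexAmplitude (g h : ℝ → ℝ) (t : ℝ) : ℂ := g t - h t * Complex.I

lemma norm_complexAmplitude (t : ℝ) : ‖complexAmplitude g h t‖ = √(g t ^ 2 + h t ^ 2) := by
  simpa [sub_eq_add_neg, complexAmplitude] using Complex.norm_add_mul_I (g t) (-h t)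

lemma modulated_complexAmplitude (n : ℕ) (γ t : ℝ) :
    modulated (complexAmplitude g h) n γ t = g t * cos (n * t + γ) + h t * sin (n * t + γ) :=
  wave_sub_mul_I _ _ _

lemma complexAmplitude_periodic {T : ℝ} (hg : Function.Periodic g T) (hh : Function.Periodic h T) :
    Function.Periodic (complexAmplitude g h) T := fun t => by
  rw [complexAmplitude, complexAmplitude, hg t, hh t]

lemma hasDerivAt_complexAmplitude {t : ℝ} (hg : DifferentiableAt ℝ g t)
    (hh : DifferentiableAt ℝ h t) :
    HasDerivAt (complexAmplitude g h) (complexAmplitude (deriv g) (deriv h) t) t :=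
  hg.hasDerivAt.ofReal_comp.sub (hh.hasDerivAt.ofReal_comp.mul_const _)

end ComplexAmplitude

theorem statement7_general (s : ℝ≥0∞) (hs : 1 ≤ s) (g h : ℝ → ℝ)
    (hgper : ∀ t, g (t + 2 * π) = g t) (hhper : ∀ t, h (t + 2 * π) = h t)
    (hg : Differentiable ℝ g) (hh : Differentiable ℝ h)
    (hr : ∀ t, √(g t ^ 2 + h t ^ 2) ≠ 0)
    (hMb : BddAbove (Set.range fun t =>
      √(deriv g t ^ 2 + deriv h t ^ 2) / √(g t ^ 2 + h t ^ 2)))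
    (M : ℝ) (hM : M = ⨆ t : ℝ, √(deriv g t ^ 2 + deriv h t ^ 2) / √(g t ^ 2 + h t ^ 2))
    (γ : ℝ) (n : ℕ) (hn : 1 ≤ n) :
    ∃ δ : ℝ, |δ| ≤ 2 * π ∧
      (⨅ l : ℝ, periodNorm s
          (fun t => g t * cos (n * t + γ) + h t * sin (n * t + γ) - l)) =
        periodNorm s (fun t => √(g t ^ 2 + h t ^ 2)) *
          (periodNorm s cos / (2 * π) ^ (1 / s.toReal) + δ * M / n) := by
  have hderiv (t : ℝ) := hasDerivAt_complexAmplitude (hg t) (hh t)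
  have hM0 : 0 ≤ M := hM ▸ Real.iSup_nonneg fun t => by positivity
  have hbound (t : ℝ) :
      ‖deriv (complexAmplitude g h) t‖ ≤ M * ‖complexAmplitude g h t‖ := by
    rw [(hderiv t).deriv, norm_complexAmplitude, norm_complexAmplitude,
      ← div_le_iff₀ ((sqrt_nonneg _).lt_of_ne' (hr t)), hM]
    exact le_ciSup hMb t
  have estimate := abs_iInf_periodNorm_modulated_sub_le (γ := γ) hs
    (fun t => (hderiv t).differentiableAt) (complexAmplitude_periodic hgper hhper) hM0 hbound
    (Nat.one_le_iff_ne_zero.1 hn)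
  simp only [modulated_complexAmplitude, norm_complexAmplitude] at estimate
  simp only [mul_div_assoc _ M]
  refine exists_abs_le_and_eq_mul_add periodNorm_nonneg (by positivity) two_pi_pos.le ?_
  exact estimate.trans_eq (by ring)

theorem statement7 (s : ℝ≥0∞) (hs : 1 ≤ s) (g h : ℝ → ℝ)
    (hgper : ∀ t, g (t + 2 * π) = g t) (hhper : ∀ t, h (t + 2 * π) = h t)
    (hg : Differentiable ℝ g) (hh : Differentiable ℝ h)
    (hr : ∀ t, Real.sqrt (g t ^ 2 + h t ^ 2) ≠ 0)
    (hMb : BddAbove (Set.range fun t =>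
      Real.sqrt (deriv g t ^ 2 + deriv h t ^ 2) / Real.sqrt (g t ^ 2 + h t ^ 2)))
    (M : ℝ)
    (hM : M = ⨆ t : ℝ, Real.sqrt (deriv g t ^ 2 + deriv h t ^ 2) / Real.sqrt (g t ^ 2 + h t ^ 2))
    (γ : ℝ) (n : ℕ) (hn1 : 1 ≤ n)
    (hn : s ≠ ∞ → 4 * π * s.toReal * M ≤ (n : ℝ)) :
    ∃ δ : ℝ, |δ| < 14 * π ∧
      (⨅ l : ℝ, periodNorm s
          (fun t => g t * Real.cos (n * t + γ) + h t * Real.sin (n * t + γ) - l)) =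
        periodNorm s (fun t => Real.sqrt (g t ^ 2 + h t ^ 2)) *
          (periodNorm s Real.cos / (2 * π) ^ (1 / s.toReal) + δ * M / n) :=
  (statement7_general s hs g h hgper hhper hg hh hr hMb M hM γ n hn1).imp fun _ hδ =>
    ⟨hδ.1.trans_lt (by linarith [pi_pos]), hδ.2⟩
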